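/- For the usual least squares (P = Id), the covariance V = (J'J)⁻¹J'ΩJ(J'J)⁻¹ satisfies V = (J'J)⁻¹W(J'J)⁻¹ where W_{kl} = ∫_{−1/(2δt)}^{1/(2δt)} S(f) conj(F{J}_k(f)) F{J}_l(f) / δt² df, provided Ω_{ij} = R((i−j)δt) and S = F{R} is the DTFT of the (absolutely summable) correlation sequence R(kδt). -/

import Mathlib

open Matrix MeasureTheory ComplexOrder

/-- The complex exponential `e^{-2πix}`. -/
noncomputable def cexp (x : ℝ) : ℂ := Complex.exp (-2 * Real.pi * x * Complex.I)

/-- Extension of an `N × p` matrix to `ℤ × Fin p` by zeros. -/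
def matExt {N p : ℕ} (J : Matrix (Fin N) (Fin p) ℂ) : ℤ → Fin p → ℂ :=
  fun k l => if h : 0 ≤ k ∧ k < N then J ⟨k.toNat, by omega⟩ l else 0

/-- The Discrete Time Fourier Transform of a summable `G : ℤ → ℂ`. -/
noncomputable def dtft (δt : ℝ) (G : ℤ → ℂ) (f : ℝ) : ℂ :=
  (δt : ℂ) * ∑' k : ℤ, G k * cexp (k * f * δt)

lemma cexp_add' (x y : ℝ) : cexp (x + y) = cexp x * cexp y := by
  unfold cexp
  rw [← Complex.exp_add]
  congr 1
  push_cast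
  ring

lemma star_cexp (x : ℝ) : star (cexp x) = cexp (-x) := by
  unfold cexp
  rw [Complex.star_def, ← Complex.exp_conj]
  congr 1
  have h2 : (starRingEnd ℂ) 2 = 2 := Complex.conj_ofNat 2
  simp [h2]

lemma norm_cexp' (x : ℝ) : ‖cexp x‖ = 1 := by
  unfold cexp
  have : (-2 * Real.pi * x * Complex.I : ℂ) = ((-2 * Real.pi * x : ℝ) : ℂ) * Complex.I := by
    push_cast; ring
  rw [this, Complex.norm_exp_ofReal_mul_I]

lemma continuous_cexp' : Continuous cexp := by
  unfold cexp
  fun_prop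

lemma integral_cexp' (δt : ℝ) (hδt : 0 < δt) (n : ℤ) :
    ∫ f in (-(1 / (2 * δt)))..(1 / (2 * δt)), cexp (n * f * δt)
      = if n = 0 then 1 / (δt : ℂ) else 0 := by
  have hd : (δt : ℂ) ≠ 0 := by exact_mod_cast hδt.ne'
  split_ifs with h
  · subst h
    simp [cexp]
    field_simp
    norm_num
  · have hn : (n : ℂ) ≠ 0 := by exact_mod_cast h
    have hc : (-2 * Real.pi * n * δt * Complex.I : ℂ) ≠ 0 := by
      have : (Real.pi : ℂ) ≠ 0 := by exact_mod_cast Real.pi_ne_zero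
      simp [hn, hd, this]
    have e : ∀ f : ℝ, cexp (n * f * δt)
        = Complex.exp ((-2 * Real.pi * n * δt * Complex.I : ℂ) * f) := by
      intro f
      unfold cexp
      congr 1
      push_cast
      ring
    simp_rw [e]
    rw [integral_exp_mul_complex hc]
    have : Complex.exp ((-2 * Real.pi * n * δt * Complex.I : ℂ) * ((1 / (2 * δt) : ℝ) : ℂ))
        = Complex.exp ((-2 * Real.pi * n * δt * Complex.I : ℂ) * ((-(1 / (2 * δt)) : ℝ) : ℂ)) := by
      rw [Complex.exp_eq_exp_iff_exists_int]
      refine ⟨-n, ?_⟩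
      push_cast
      field_simp
      ring
    rw [this]
    simp

lemma continuous_dtft (δt : ℝ) (R : ℤ → ℂ) (hR : Summable fun k : ℤ => ‖R k‖) :
    Continuous (dtft δt R) := by
  unfold dtft
  refine continuous_const.mul (continuous_tsum (u := fun k => ‖R k‖) ?_ hR ?_)
  · intro k
    exact continuous_const.mul (continuous_cexp'.comp (by fun_prop))
  · intro k f
    rw [norm_mul, norm_cexp', mul_one]

lemma integral_dtft (δt : ℝ) (hδt : 0 < δt) (R : ℤ → ℂ) (hR : Summable fun k : ℤ => ‖R k‖)
    (n : ℤ) :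
    ∫ f in (-(1 / (2 * δt)))..(1 / (2 * δt)), dtft δt R f * cexp (-(n * f * δt)) = R n := by
  have hd : (δt : ℂ) ≠ 0 := by exact_mod_cast hδt.ne'
  have e : ∀ f : ℝ, dtft δt R f * cexp (-(n * f * δt))
      = (δt : ℂ) * ∑' k : ℤ, R k * cexp (((k - n : ℤ) : ℝ) * f * δt) := by
    intro f
    unfold dtft
    rw [mul_assoc, ← tsum_mul_right]
    congr 2
    ext k
    rw [mul_assoc, ← cexp_add']
    congr 2
    push_cast
    ring
  simp_rw [e]
  rw [intervalIntegral.integral_const_mul]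
  have hs := intervalIntegral.hasSum_integral_of_dominated_convergence
    (μ := volume) (a := -(1 / (2 * δt))) (b := 1 / (2 * δt))
    (F := fun (k : ℤ) (f : ℝ) => R k * cexp (((k - n : ℤ) : ℝ) * f * δt))
    (f := fun f => ∑' k : ℤ, R k * cexp (((k - n : ℤ) : ℝ) * f * δt))
    (fun k _ => ‖R k‖)
    (fun k => (continuous_const.mul
      (continuous_cexp'.comp (by fun_prop))).aestronglyMeasurable)
    (fun k => Filter.Eventually.of_forall fun f _ => by
      rw [norm_mul, norm_cexp', mul_one])
    (Filter.Eventually.of_forall fun f _ => hR)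
    (by simp)
    (Filter.Eventually.of_forall fun f _ => by
      refine Summable.hasSum (Summable.of_norm ?_)
      simpa [norm_mul, norm_cexp'] using hR)
  rw [← hs.tsum_eq]
  simp_rw [intervalIntegral.integral_const_mul, integral_cexp' δt hδt]
  rw [tsum_eq_single n]
  · simp
    field_simp
  · intro k hk
    simp [sub_eq_zero, hk]

lemma dtft_matExt {N p : ℕ} (δt : ℝ) (J : Matrix (Fin N) (Fin p) ℂ) (l : Fin p) (f : ℝ) :
    dtft δt (fun i => matExt J i l) f
      = (δt : ℂ) * ∑ i : Fin N, J i l * cexp (((i : ℤ) : ℝ) * f * δt) := by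
  unfold dtft
  congr 1
  have hinj : Function.Injective (fun i : Fin N => ((i : ℕ) : ℤ)) := by
    intro a b h
    apply Fin.ext
    simpa using h
  rw [← tsum_fintype (L := SummationFilter.unconditional _), ← hinj.tsum_eq]
  · congr 1
    ext i
    simp [matExt]
  · intro k hk
    by_contra hc
    apply hk
    have : ¬ (0 ≤ k ∧ k < N) := by
      intro h
      apply hc
      exact ⟨⟨k.toNat, by omega⟩, by simp [h.1]⟩
    simp [matExt, this]

/-- For usual least squares (`P = Id`), the covariance
`V = (JᴴJ)⁻¹ Jᴴ Ω J (JᴴJ)⁻¹` equals `(JᴴJ)⁻¹ W (JᴴJ)⁻¹` where `W` is expressed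
in the Fourier domain through the noise PSD `S = F{R}`. -/
theorem stmt_18 {N p : ℕ} (δt : ℝ) (hδt : 0 < δt)
    (J : Matrix (Fin N) (Fin p) ℂ) (hJ : J.rank = p)
    (R : ℤ → ℂ) (hR : Summable fun k : ℤ => ‖R k‖)
    (Om : Matrix (Fin N) (Fin N) ℂ) (hOm : ∀ i j, Om i j = R ((i : ℤ) - (j : ℤ)))
    (S : ℝ → ℂ) (hS : ∀ f, S f = dtft δt R f)
    (W : Matrix (Fin p) (Fin p) ℂ)
    (hW : ∀ k l, W k l = ∫ f in (-(1 / (2 * δt)))..(1 / (2 * δt)),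
        S f * star (dtft δt (fun i => matExt J i k) f) *
          dtft δt (fun i => matExt J i l) f / (δt : ℂ) ^ 2) :
    (Jᴴ * J)⁻¹ * Jᴴ * Om * J * (Jᴴ * J)⁻¹ = (Jᴴ * J)⁻¹ * W * (Jᴴ * J)⁻¹ := by
  have hd : (δt : ℂ) ≠ 0 := by exact_mod_cast hδt.ne'
  have key : W = Jᴴ * Om * J := by
    ext k l
    rw [hW]
    have e : ∀ f : ℝ, S f * star (dtft δt (fun i => matExt J i k) f) *
          dtft δt (fun i => matExt J i l) f / (δt : ℂ) ^ 2
        = ∑ j : Fin N, ∑ i : Fin N, (star (J i k) * J j l) *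
          (dtft δt R f * cexp (-(((i : ℤ) - (j : ℤ) : ℤ) * f * δt))) := by
      intro f
      rw [hS, dtft_matExt, dtft_matExt, star_mul', star_sum]
      have h1 : star (δt : ℂ) = δt := by simp
      rw [h1]
      have h2 : dtft δt R f * ((δt : ℂ) * ∑ i : Fin N, star (J i k * cexp (((i : ℤ) : ℝ) * f * δt)))
          * ((δt : ℂ) * ∑ i : Fin N, J i l * cexp (((i : ℤ) : ℝ) * f * δt)) / (δt : ℂ) ^ 2
          = dtft δt R f * ((∑ i : Fin N, star (J i k * cexp (((i : ℤ) : ℝ) * f * δt)))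
          * (∑ i : Fin N, J i l * cexp (((i : ℤ) : ℝ) * f * δt))) := by
        generalize (∑ i : Fin N, star (J i k * cexp (((i : ℤ) : ℝ) * f * δt))) = A
        generalize (∑ i : Fin N, J i l * cexp (((i : ℤ) : ℝ) * f * δt)) = B
        field_simp
      rw [h2, Finset.sum_mul_sum, Finset.sum_comm, Finset.mul_sum]
      refine Finset.sum_congr rfl fun j _ => ?_
      rw [Finset.mul_sum]
      refine Finset.sum_congr rfl fun i _ => ?_
      have h3 : -((((i : ℤ) - (j : ℤ) : ℤ) : ℝ) * f * δt)
          = -(((i : ℤ) : ℝ) * f * δt) + ((j : ℤ) : ℝ) * f * δt := by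
        push_cast; ring
      rw [h3, cexp_add', star_mul', star_cexp]
      ring
    have hc : ∀ n : ℤ, Continuous fun f : ℝ => dtft δt R f * cexp (-(n * f * δt)) := fun n =>
      (continuous_dtft δt R hR).mul (continuous_cexp'.comp (by fun_prop))
    simp_rw [e]
    rw [intervalIntegral.integral_finsetSum]
    · simp only [Matrix.mul_apply, Finset.sum_mul]
      refine Finset.sum_congr rfl fun j _ => ?_
      rw [intervalIntegral.integral_finsetSum]
      · refine Finset.sum_congr rfl fun i _ => ?_
        rw [intervalIntegral.integral_const_mul, integral_dtft δt hδt R hR, hOm,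
          Matrix.conjTranspose_apply]
        ring
      · intro i _
        exact (continuous_const.mul (hc _)).intervalIntegrable _ _
    · intro j _
      exact (continuous_finsetSum _ fun i _ =>
        continuous_const.mul (hc _)).intervalIntegrable _ _
  rw [key]
  simp only [Matrix.mul_assoc]
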